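/- arXiv:2605.28012 — 2 statements merged into one kernel-verified Lean document; each statement's English description precedes it below -/
import Mathlib

section
/- For all nonnegative integers m and n, the odd q-super Catalan number C_{m,n}(q) = [2m+1]! [2n]! / ([m+n+1]! [m]! [n]!) is a polynomial in q with nonnegative integer coefficients. -/
open Finset

noncomputable section

/-- The variable `q`, as a rational function over `ℚ`. -/
def q : RatFunc ℚ := RatFunc.X

/-- The `q`-integer `[n] = (1 - q^n)/(1 - q)`. -/
def qint (n : ℕ) : RatFunc ℚ := (1 - q ^ n) / (1 - q)

/-- The `q`-factorial `[n]! = [1][2]⋯[n]`, with `[0]! = 1`. -/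
def qfact (n : ℕ) : RatFunc ℚ := ∏ i ∈ Finset.range n, qint (i + 1)

/-- The odd `q`-super Catalan number
`C_{m,n}(q) = [2m+1]! [2n]! / ([m+n+1]! [m]! [n]!)`. -/
def oddCatalan (m n : ℕ) : RatFunc ℚ :=
  qfact (2 * m + 1) * qfact (2 * n) / (qfact (m + n + 1) * qfact m * qfact n)

/-- A rational function lies in `ℕ[q]` if it equals a polynomial in `q`
with nonnegative integer coefficients. -/
def IsNonnegPoly (f : RatFunc ℚ) : Prop :=
  ∃ p : Polynomial ℕ, f = algebraMap (Polynomial ℚ) (RatFunc ℚ) (p.map (Nat.castRingHom ℚ))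

/-!
Write `A x p = [2x+2p]! / ([p]! [x+p]! [2x+p]!)`. Applying the `q`-Vandermonde convolution to
`qChoose q (2x+2p) p`, and again to each resulting summand, gives
`A x p = ∑_{i+j=p} ∑_k q^((x+j)j + (x+k)k) / ([i-k]! [j-k]! [k]! [x+k]!)`.

For `n = m+1+p`, taking `x = m+1` writes `C_{m,n}` as an `ℕ[q]`-combination of the `C_{m,k}` with
`2k ≤ p`. For `m = n+p+1`, the splitting `[2m+1] = [m+n+1] + q^(m+n+1) [m-n]` writes `C_{m,n}` as
the ordinary `q`-super Catalan number plus a power of `q` times a multiple of `A (n+1) p`, and the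
latter is an `ℕ[q]`-combination of the `C_{k,n}` with `2k ≤ p`. Both cases reduce `m + n`. The
ordinary `q`-super Catalan numbers are handled in the same way, with `x = m` and
`n = m+p`.
-/

section QChoose

variable {R : Type*}

/-- The Gaussian binomial coefficient with parameter `t`, through its Pascal recurrence, so that it
makes sense over any semiring and vanishes for `n < k`. -/
def qChoose [Semiring R] (t : R) : ℕ → ℕ → R
  | _, 0 => 1
  | 0, _ + 1 => 0
  | n + 1, k + 1 => qChoose t n k + t ^ (k + 1) * qChoose t n (k + 1)

section Semiring

variable [Semiring R] (t : R)

@[simp]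
lemma qChoose_zero_right (n : ℕ) : qChoose t n 0 = 1 := by
  cases n <;> rfl

lemma qChoose_succ_succ (n k : ℕ) :
    qChoose t (n + 1) (k + 1) = qChoose t n k + t ^ (k + 1) * qChoose t n (k + 1) := rfl

lemma qChoose_eq_zero_of_lt : ∀ {n k : ℕ}, n < k → qChoose t n k = 0
  | 0, _ + 1, _ => rfl
  | n + 1, k + 1, h => by
    rw [qChoose_succ_succ, qChoose_eq_zero_of_lt (by lia), qChoose_eq_zero_of_lt (by lia),
      mul_zero, add_zero]

lemma qChoose_self (n : ℕ) : qChoose t n n = 1 := by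
  induction n with
  | zero => rfl
  | succ n ih => rw [qChoose_succ_succ, ih, qChoose_eq_zero_of_lt t n.lt_succ_self, mul_zero,
      add_zero]

variable {t}

lemma qChoose_mem {S : Type*} [SetLike S R] [SubsemiringClass S R] {s : S} (ht : t ∈ s) :
    ∀ n k : ℕ, qChoose t n k ∈ s
  | n, 0 => by simp [one_mem]
  | 0, _ + 1 => zero_mem s
  | n + 1, k + 1 =>
    add_mem (qChoose_mem ht n k) (mul_mem (pow_mem ht _) (qChoose_mem ht n (k + 1)))

end Semiring

lemma qChoose_add_eq_sum_antidiagonal [CommSemiring R] (t : R) (m n k : ℕ) :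
    qChoose t (m + n) k =
      ∑ ij ∈ antidiagonal k, t ^ ((m - ij.1) * ij.2) * qChoose t m ij.1 * qChoose t n ij.2 := by
  induction m generalizing k with
  | zero => cases k <;> simp [Nat.sum_antidiagonal_succ, qChoose_eq_zero_of_lt]
  | succ m ih =>
    cases k with
    | zero => simp
    | succ k =>
      have hpascal : ∀ ij ∈ antidiagonal k,
          t ^ ((m + 1 - (ij.1 + 1)) * ij.2) * qChoose t (m + 1) (ij.1 + 1) * qChoose t n ij.2 =
            t ^ ((m - ij.1) * ij.2) * qChoose t m ij.1 * qChoose t n ij.2 +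
            t ^ (k + 1) * (t ^ ((m - (ij.1 + 1)) * ij.2) * qChoose t m (ij.1 + 1) *
              qChoose t n ij.2) := by
        rintro ⟨i, j⟩ hij
        obtain rfl : i + j = k := mem_antidiagonal.mp hij
        rcases lt_or_ge m (i + 1) with hm | hm
        · simp [qChoose_succ_succ, qChoose_eq_zero_of_lt t hm]
        · obtain ⟨l, rfl⟩ := Nat.exists_eq_add_of_le hm
          simp only [qChoose_succ_succ, Nat.add_sub_add_right, Nat.add_sub_cancel_left,
            show i + 1 + l - i = l + 1 by lia]
          ring
      rw [Nat.add_right_comm, qChoose_succ_succ, ih, ih, Nat.sum_antidiagonal_succ,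
        Nat.sum_antidiagonal_succ, sum_congr rfl hpascal, sum_add_distrib, ← mul_sum]
      simp only [qChoose_zero_right, Nat.sub_zero]
      ring

end QChoose

lemma qint_add (m n : ℕ) : qint (m + n) = qint m + q ^ m * qint n := by
  unfold qint
  ring

lemma one_sub_q_pow_ne_zero {n : ℕ} (hn : n ≠ 0) : 1 - q ^ n ≠ 0 := by
  have h : (1 - Polynomial.X ^ n : Polynomial ℚ) ≠ 0 := fun h => by
    simpa [hn] using congrArg (Polynomial.eval 0) h
  simpa [q] using (map_ne_zero_iff _ (RatFunc.algebraMap_injective ℚ)).mpr h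

lemma qint_ne_zero {n : ℕ} (hn : n ≠ 0) : qint n ≠ 0 :=
  div_ne_zero (one_sub_q_pow_ne_zero hn) (by simpa using one_sub_q_pow_ne_zero one_ne_zero)

lemma qfact_zero : qfact 0 = 1 := prod_range_zero _

lemma qfact_succ (n : ℕ) : qfact (n + 1) = qfact n * qint (n + 1) := prod_range_succ _ _

lemma qfact_ne_zero (n : ℕ) : qfact n ≠ 0 :=
  prod_ne_zero_iff.mpr fun i _ => qint_ne_zero i.succ_ne_zero

lemma qChoose_mul_qfact_mul_qfact (i j : ℕ) :
    qChoose q (i + j) i * (qfact i * qfact j) = qfact (i + j) := by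
  induction i generalizing j with
  | zero => simp [qfact_zero]
  | succ i ihi =>
    induction j with
    | zero => simp [qChoose_self, qfact_zero]
    | succ j ihj =>
      have hi := ihi (j + 1)
      rw [← add_assoc, Nat.add_right_comm i j 1] at hi
      rw [← add_assoc, qChoose_succ_succ, qfact_succ (i + 1 + j), Nat.add_assoc (i + 1) j 1,
        qint_add, qfact_succ j]
      rw [qfact_succ j] at hi
      rw [qfact_succ i] at ihj ⊢
      linear_combination qint (i + 1) * hi + q ^ (i + 1) * qint (j + 1) * ihj

lemma qChoose_add_left (i j : ℕ) :
    qChoose q (i + j) i = qfact (i + j) / (qfact i * qfact j) :=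
  eq_div_of_mul_eq (mul_ne_zero (qfact_ne_zero i) (qfact_ne_zero j))
    (qChoose_mul_qfact_mul_qfact i j)

lemma qChoose_eq_qfact_div {n k : ℕ} (h : k ≤ n) :
    qChoose q n k = qfact n / (qfact k * qfact (n - k)) := by
  simpa [Nat.add_sub_cancel' h] using qChoose_add_left k (n - k)

lemma qfact_add_add_div (x i j : ℕ) :
    qfact (x + i + j) / (qfact i * qfact j * qfact (x + i) * qfact (x + j)) =
      ∑ k ∈ range (min i j + 1),
        q ^ ((x + k) * k) / (qfact (i - k) * qfact (j - k) * qfact k * qfact (x + k)) := by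
  have hterm : ∀ k ∈ range (min i j + 1),
      q ^ ((x + j - (j - k)) * k) * qChoose q (x + j) (j - k) * qChoose q i k /
          (qfact i * qfact (x + j)) =
        q ^ ((x + k) * k) / (qfact (i - k) * qfact (j - k) * qfact k * qfact (x + k)) := by
    intro k hk
    have hk' : k ≤ i ∧ k ≤ j := by simpa [Nat.lt_succ_iff] using hk
    rw [qChoose_eq_qfact_div hk'.1, qChoose_eq_qfact_div (by lia : j - k ≤ x + j),
      show x + j - (j - k) = x + k by lia]
    field_simp [qfact_ne_zero]
  calc qfact (x + i + j) / (qfact i * qfact j * qfact (x + i) * qfact (x + j))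
      = qChoose q (x + j + i) j / (qfact i * qfact (x + j)) := by
        rw [show x + j + i = j + (x + i) by ring, qChoose_add_left,
          show x + i + j = j + (x + i) by ring]
        field_simp [qfact_ne_zero]
    _ = ∑ k ∈ range (j + 1), q ^ ((x + j - (j - k)) * k) * qChoose q (x + j) (j - k) *
          qChoose q i k / (qfact i * qfact (x + j)) := by
        rw [qChoose_add_eq_sum_antidiagonal, ← Nat.sum_antidiagonal_swap,
          Nat.sum_antidiagonal_eq_sum_range_succ_mk, sum_div]
        rfl
    _ = ∑ k ∈ range (min i j + 1), q ^ ((x + j - (j - k)) * k) * qChoose q (x + j) (j - k) *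
          qChoose q i k / (qfact i * qfact (x + j)) := by
        refine (sum_subset (range_mono (by lia)) fun k hkj hk => ?_).symm
        have hik : i < k := by simp only [mem_range] at hkj hk; lia
        rw [qChoose_eq_zero_of_lt q hik, mul_zero, zero_div]
    _ = _ := sum_congr rfl hterm

/-- At `q = 1`, collecting the terms with the same `k` turns this into the identity behind Gessel's
expansion of the super Catalan numbers,
`∑ k, 2 ^ (p - 2 * k) * p! / ((p - 2 * k)! * k! * (x + k)!) =
(2 * x + 2 * p)! / ((x + p)! * (2 * x + p)!)`,
divided by `p!`. -/
lemma qfact_two_mul_div (x p : ℕ) :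
    qfact (2 * (x + p)) / (qfact p * qfact (x + p) * qfact (2 * x + p)) =
      ∑ ij ∈ antidiagonal p, ∑ k ∈ range (min ij.1 ij.2 + 1),
        q ^ ((x + ij.2) * ij.2 + (x + k) * k) /
          (qfact (ij.1 - k) * qfact (ij.2 - k) * qfact k * qfact (x + k)) := by
  calc qfact (2 * (x + p)) / (qfact p * qfact (x + p) * qfact (2 * x + p))
      = qChoose q (x + p + (x + p)) p / qfact (x + p) := by
        rw [show x + p + (x + p) = p + (2 * x + p) by ring, qChoose_add_left,
          show 2 * (x + p) = p + (2 * x + p) by ring]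
        field_simp [qfact_ne_zero]
    _ = ∑ ij ∈ antidiagonal p, q ^ ((x + ij.2) * ij.2) * (qfact (x + ij.1 + ij.2) /
          (qfact ij.1 * qfact ij.2 * qfact (x + ij.1) * qfact (x + ij.2))) := by
        rw [qChoose_add_eq_sum_antidiagonal, sum_div]
        refine sum_congr rfl fun ⟨i, j⟩ hij => ?_
        obtain rfl : i + j = p := mem_antidiagonal.mp hij
        rw [show x + (i + j) - i = x + j by lia, ← add_assoc,
          qChoose_eq_qfact_div (by lia : i ≤ x + i + j),
          qChoose_eq_qfact_div (by lia : j ≤ x + i + j),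
          show x + i + j - i = x + j by lia, Nat.add_sub_cancel]
        field_simp [qfact_ne_zero]
    _ = _ := by
        simp only [qfact_add_add_div, mul_sum, pow_add, mul_div_assoc]

lemma isNonnegPoly_iff_mem_adjoin {f : RatFunc ℚ} :
    IsNonnegPoly f ↔ f ∈ Algebra.adjoin ℕ {q} := by
  have haeval (p : Polynomial ℕ) : Polynomial.aeval q p =
      algebraMap (Polynomial ℚ) (RatFunc ℚ) (p.map (Nat.castRingHom ℚ)) := by
    induction p using Polynomial.induction_on' with
    | add p r hp hr => simp [hp, hr]
    | monomial n c => simp [q, ← Polynomial.C_mul_X_pow_eq_monomial]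
  simp [IsNonnegPoly, Algebra.adjoin_singleton_eq_range_aeval, haeval, eq_comm]

lemma qChoose_mem_adjoin (n k : ℕ) : qChoose q n k ∈ Algebra.adjoin ℕ {q} :=
  qChoose_mem (Algebra.self_mem_adjoin_singleton ℕ q) n k

lemma q_pow_mem_adjoin (n : ℕ) : q ^ n ∈ Algebra.adjoin ℕ {q} :=
  pow_mem (Algebra.self_mem_adjoin_singleton ℕ q) n

lemma mul_qfact_two_mul_div_mem_adjoin {g : RatFunc ℚ} {x p r : ℕ}
    (h : ∀ k, 2 * k ≤ p →
      g * qfact (2 * k + r) / (qfact k * qfact (x + k)) ∈ Algebra.adjoin ℕ {q}) :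
    g * qfact (p + r) * qfact (2 * (x + p)) / (qfact p * qfact (x + p) * qfact (2 * x + p)) ∈
      Algebra.adjoin ℕ {q} := by
  rw [mul_div_assoc, qfact_two_mul_div, mul_sum]
  refine sum_mem fun ⟨i, j⟩ hij => ?_
  obtain rfl : i + j = p := mem_antidiagonal.mp hij
  rw [mul_sum]
  refine sum_mem fun k hk => ?_
  obtain ⟨hki, hkj⟩ : k ≤ i ∧ k ≤ j := by simpa [Nat.lt_succ_iff] using hk
  obtain ⟨a, rfl⟩ := Nat.exists_eq_add_of_le' hki
  obtain ⟨b, rfl⟩ := Nat.exists_eq_add_of_le' hkj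
  have hterm : g * qfact (a + k + (b + k) + r) *
      (q ^ ((x + (b + k)) * (b + k) + (x + k) * k) /
        (qfact (a + k - k) * qfact (b + k - k) * qfact k * qfact (x + k))) =
      q ^ ((x + (b + k)) * (b + k) + (x + k) * k) *
        (qChoose q (a + b + (2 * k + r)) (a + b) * qChoose q (a + b) a) *
        (g * qfact (2 * k + r) / (qfact k * qfact (x + k))) := by
    rw [qChoose_add_left, qChoose_add_left, Nat.add_sub_cancel, Nat.add_sub_cancel,
      show a + k + (b + k) + r = a + b + (2 * k + r) by ring]
    field_simp [qfact_ne_zero]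
  rw [hterm]
  exact mul_mem (mul_mem (q_pow_mem_adjoin _)
    (mul_mem (qChoose_mem_adjoin _ _) (qChoose_mem_adjoin _ _))) (h k (by lia))

/-- The `q`-super Catalan number `[2m]! [2n]! / ([m+n]! [m]! [n]!)`, the companion of
`oddCatalan m n` that appears when `n ≤ m`. -/
def superCatalan (m n : ℕ) : RatFunc ℚ :=
  qfact (2 * m) * qfact (2 * n) / (qfact (m + n) * qfact m * qfact n)

lemma superCatalan_comm (m n : ℕ) : superCatalan m n = superCatalan n m := by
  unfold superCatalan
  rw [add_comm m n]
  ring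

lemma superCatalan_self (n : ℕ) : superCatalan n n = qChoose q (n + n) n := by
  rw [superCatalan, qChoose_add_left, ← two_mul]
  field_simp [qfact_ne_zero]

lemma superCatalan_add_mem_adjoin {m p : ℕ}
    (h : ∀ k, 2 * k ≤ p → superCatalan m k ∈ Algebra.adjoin ℕ {q}) :
    superCatalan m (m + p) ∈ Algebra.adjoin ℕ {q} := by
  convert mul_qfact_two_mul_div_mem_adjoin (g := qfact (2 * m) / qfact m) (x := m) (p := p)
    (r := 0) fun k hk => ?_ using 1
  · rw [superCatalan, ← add_assoc, ← two_mul, add_zero]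
    field_simp [qfact_ne_zero]
  · convert h k hk using 1
    rw [superCatalan, add_zero]
    field_simp

lemma superCatalan_mem_adjoin (m n : ℕ) : superCatalan m n ∈ Algebra.adjoin ℕ {q} := by
  induction hs : m + n using Nat.strong_induction_on generalizing m n with
  | _ s ih =>
    wlog hmn : m ≤ n generalizing m n
    · rw [superCatalan_comm]
      exact this n m (by lia) (by lia)
    obtain ⟨p, rfl⟩ := Nat.exists_eq_add_of_le hmn
    rcases p.eq_zero_or_pos with rfl | hp
    · rw [add_zero, superCatalan_self]
      exact qChoose_mem_adjoin _ _
    · exact superCatalan_add_mem_adjoin fun k hk => ih (m + k) (by lia) m k rfl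

lemma oddCatalan_add_mem_adjoin {m p : ℕ}
    (h : ∀ k, 2 * k ≤ p → oddCatalan m k ∈ Algebra.adjoin ℕ {q}) :
    oddCatalan m (m + 1 + p) ∈ Algebra.adjoin ℕ {q} := by
  convert mul_qfact_two_mul_div_mem_adjoin (g := qfact (2 * m + 1) / qfact m) (x := m + 1)
    (p := p) (r := 0) fun k hk => ?_ using 1
  · rw [oddCatalan, show m + (m + 1 + p) + 1 = 2 * (m + 1) + p by ring, add_zero]
    field_simp [qfact_ne_zero]
  · convert h k hk using 1
    rw [oddCatalan, add_zero, Nat.add_right_comm m 1 k]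
    field_simp

lemma oddCatalan_add_left (n p : ℕ) :
    oddCatalan (n + p) n = superCatalan (n + p) n + q ^ (2 * n + p + 1) * (qint p *
      (qfact (2 * (n + p)) * qfact (2 * n) /
        (qfact (2 * n + p + 1) * qfact (n + p) * qfact n))) := by
  have hsplit : qint (2 * (n + p) + 1) =
      qint (2 * n + p + 1) + q ^ (2 * n + p + 1) * qint p := by
    rw [← qint_add]
    ring_nf
  rw [oddCatalan, superCatalan, show n + p + n = 2 * n + p by ring, qfact_succ, hsplit,
    qfact_succ (2 * n + p)]
  field_simp [qfact_ne_zero, qint_ne_zero (Nat.succ_ne_zero (2 * n + p))]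

lemma oddCatalan_add_succ_mem_adjoin {n p : ℕ}
    (h : ∀ k, 2 * k ≤ p → oddCatalan k n ∈ Algebra.adjoin ℕ {q}) :
    oddCatalan (n + (p + 1)) n ∈ Algebra.adjoin ℕ {q} := by
  rw [oddCatalan_add_left]
  refine add_mem (superCatalan_mem_adjoin _ _) (mul_mem (q_pow_mem_adjoin _) ?_)
  convert mul_qfact_two_mul_div_mem_adjoin (g := qfact (2 * n) / qfact n) (x := n + 1)
    (p := p) (r := 1) fun k hk => ?_ using 1
  · rw [show 2 * (n + 1) + p = 2 * n + (p + 1) + 1 by ring,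
      show n + 1 + p = n + (p + 1) by ring, qfact_succ p]
    field_simp [qfact_ne_zero]
  · convert h k hk using 1
    rw [oddCatalan, show n + 1 + k = k + n + 1 by ring]
    field_simp

lemma oddCatalan_self (n : ℕ) : oddCatalan n n = superCatalan n n := by
  simpa [qint] using oddCatalan_add_left n 0

/-- Theorem 1: for all `m, n ∈ ℕ`, the odd `q`-super Catalan number
`C_{m,n}(q)` is a polynomial in `q` with nonnegative integer coefficients. -/
theorem oddCatalan_isNonnegPoly (m n : ℕ) : IsNonnegPoly (oddCatalan m n) := by
  rw [isNonnegPoly_iff_mem_adjoin]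
  induction hs : m + n using Nat.strong_induction_on generalizing m n with
  | _ s ih =>
    rcases lt_trichotomy m n with hmn | rfl | hnm
    · obtain ⟨p, rfl⟩ := Nat.exists_eq_add_of_lt hmn
      rw [Nat.add_right_comm]
      exact oddCatalan_add_mem_adjoin fun k hk => ih (m + k) (by lia) m k rfl
    · rw [oddCatalan_self]
      exact superCatalan_mem_adjoin m m
    · obtain ⟨p, rfl⟩ := Nat.exists_eq_add_of_lt hnm
      exact oddCatalan_add_succ_mem_adjoin fun k hk => ih (k + n) (by lia) k n rfl

end
end

section
/- For all nonnegative integers m_1, m_2 and every integer k, the product of Gaussian coefficients satisfies [m_1+m_2+1 choose m_1+k] · [m_1+m_2+1 choose m_2+k] = Σ_{t=0}^{m_1-k+1} q^{t^2 + 2kt - t} · (q;q)_{m_1+m_2+1} / ((q;q)_t (q;q)_{t+2k-1} (q;q)_{m_1-k-t+1} (q;q)_{m_2-k-t+1}), where any summand containing a factor 1/(q;q)_u with u < 0 is interpreted as 0. -/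
open Finset

noncomputable section

/-- The Gaussian (q-binomial) coefficient `[N choose K]`, equal to
`[N]!/([K]![N-K]!)` if `0 ≤ K ≤ N`, and `0` otherwise. -/
def qbinom (N K : ℤ) : RatFunc ℚ :=
  if 0 ≤ K ∧ K ≤ N then qfact N.toNat / (qfact K.toNat * qfact (N - K).toNat) else 0

/-- The `q`-Pochhammer symbol `(q;q)_n = (1-q)(1-q²)⋯(1-qⁿ)`, with `(q;q)_0 = 1`. -/
def qpoch (n : ℕ) : RatFunc ℚ := ∏ i ∈ Finset.range n, (1 - q ^ (i + 1))

/-- The reciprocal `1/(q;q)_u` for an integer `u`, with the convention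
`1/(q;q)_u = 0` when `u < 0`. -/
def qpochInv (u : ℤ) : RatFunc ℚ := if 0 ≤ u then (qpoch u.toNat)⁻¹ else 0

/- Put `a = m₁ - k + 1`, `b = m₂ - k + 1`, `c = 2k - 1`, so that `a + b + c = m₁ + m₂ + 1`.
After cancelling one factor `(q;q)_{a+b+c}`, the identity becomes the `q`-Vandermonde identity
`Σ_t q^{t(t+c)} / ((q;q)_t (q;q)_{t+c} (q;q)_{a-t} (q;q)_{b-t})
  = (q;q)_{a+b+c} / ((q;q)_a (q;q)_b (q;q)_{a+c} (q;q)_{b+c})`.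
Multiplied by `1 - q^a = (1 - q^{a-t}) + q^{a-t} (1 - q^t)`, the summand splits into the summands
for `(a-1, b, c)` and, up to the factor `q^{a+c}` and a shift of `t`, for `(a-1, b-1, c+1)`. The
right-hand side satisfies the same recurrence, and `b + c` does not change, so the identity follows
by induction on `a`. -/

section

/-- The `q`-Pochhammer symbol `(x;x)_n`, with base an element `x` of any commutative ring. -/
def qPochhammer {R : Type*} [CommRing R] (x : R) (n : ℕ) : R :=
  ∏ i ∈ range n, (1 - x ^ (i + 1))

lemma qPochhammer_zero {R : Type*} [CommRing R] (x : R) : qPochhammer x 0 = 1 :=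
  prod_range_zero _

lemma qPochhammer_succ {R : Type*} [CommRing R] (x : R) (n : ℕ) :
    qPochhammer x (n + 1) = qPochhammer x n * (1 - x ^ (n + 1)) :=
  prod_range_succ _ _

variable {K : Type*} [Field K] {x : K}

/-- The reciprocal `1/(x;x)_u` of the `q`-Pochhammer symbol, extended by `0` to negative `u`. -/
def qPochhammerInv (x : K) (u : ℤ) : K :=
  if 0 ≤ u then (qPochhammer x u.toNat)⁻¹ else 0

/-- The Gaussian coefficient `[N choose M]` with base `x`. It vanishes unless `0 ≤ M ≤ N`, because
one of the two reciprocals does. -/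
def gaussBinom (x : K) (N M : ℤ) : K :=
  qPochhammer x N.toNat * qPochhammerInv x M * qPochhammerInv x (N - M)

/-- The summand `x^{t(t+c)} / ((x;x)_t (x;x)_{t+c} (x;x)_{a-t} (x;x)_{b-t})` of the `q`-Vandermonde
identity. -/
def qVandermondeTerm (x : K) (a b c t : ℤ) : K :=
  x ^ (t * (t + c)) * qPochhammerInv x t * qPochhammerInv x (t + c) *
    qPochhammerInv x (a - t) * qPochhammerInv x (b - t)

lemma one_sub_pow_succ_ne_zero (hx : ¬IsOfFinOrder x) (n : ℕ) : 1 - x ^ (n + 1) ≠ 0 :=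
  fun h => hx <| isOfFinOrder_iff_pow_eq_one.mpr ⟨n + 1, n.succ_pos, (sub_eq_zero.mp h).symm⟩

lemma qPochhammer_ne_zero (hx : ¬IsOfFinOrder x) (n : ℕ) : qPochhammer x n ≠ 0 :=
  prod_ne_zero_iff.mpr fun i _ => one_sub_pow_succ_ne_zero hx i

lemma qPochhammerInv_natCast (x : K) (n : ℕ) : qPochhammerInv x n = (qPochhammer x n)⁻¹ := by
  rw [qPochhammerInv, if_pos n.cast_nonneg, Int.toNat_natCast]

lemma qPochhammerInv_zero (x : K) : qPochhammerInv x 0 = 1 := by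
  rw [← Nat.cast_zero, qPochhammerInv_natCast, qPochhammer_zero, inv_one]

lemma qPochhammerInv_of_neg (x : K) {u : ℤ} (hu : u < 0) : qPochhammerInv x u = 0 :=
  if_neg hu.not_ge

lemma qPochhammerInv_sub_one (hx : ¬IsOfFinOrder x) (u : ℤ) :
    qPochhammerInv x (u - 1) = (1 - x ^ u) * qPochhammerInv x u := by
  rcases lt_trichotomy u 0 with hu | rfl | hu
  · rw [qPochhammerInv_of_neg x hu, qPochhammerInv_of_neg x (by lia), mul_zero]
  · rw [qPochhammerInv_of_neg x (by lia), zpow_zero, sub_self, zero_mul]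
  · obtain ⟨n, rfl⟩ : ∃ n : ℕ, u = (n + 1 : ℕ) := ⟨(u - 1).toNat, by lia⟩
    have hn : ((n + 1 : ℕ) : ℤ) - 1 = n := by lia
    rw [hn, qPochhammerInv_natCast, qPochhammerInv_natCast, qPochhammer_succ, zpow_natCast, mul_inv,
      mul_left_comm, mul_inv_cancel₀ (one_sub_pow_succ_ne_zero hx n), mul_one]

lemma support_qVandermondeTerm_subset (x : K) (a b c : ℤ) :
    Function.support (qVandermondeTerm x a b c) ⊆ Icc 0 a := by
  refine Function.support_subset_iff'.mpr fun t ht => ?_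
  rw [coe_Icc, Set.mem_Icc, not_and_or, not_le, not_le] at ht
  rcases ht with ht | ht
  · simp [qVandermondeTerm, qPochhammerInv_of_neg x ht]
  · simp [qVandermondeTerm, qPochhammerInv_of_neg x (sub_neg.mpr ht)]

lemma hasFiniteSupport_qVandermondeTerm (x : K) (a b c : ℤ) :
    (qVandermondeTerm x a b c).HasFiniteSupport :=
  (finite_toSet _).subset (support_qVandermondeTerm_subset x a b c)

lemma qVandermondeTerm_eq_zero_of_add_neg (x : K) {a b c : ℤ} (h : b + c < 0) (t : ℤ) :
    qVandermondeTerm x a b c t = 0 := by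
  rcases lt_or_ge (t + c) 0 with ht | ht
  · simp [qVandermondeTerm, qPochhammerInv_of_neg x ht]
  · simp [qVandermondeTerm, qPochhammerInv_of_neg x (show b - t < 0 by lia)]

lemma one_sub_zpow_mul_qVandermondeTerm (hx₀ : x ≠ 0) (hx : ¬IsOfFinOrder x) (a b c t : ℤ) :
    (1 - x ^ a) * qVandermondeTerm x a b c t =
      qVandermondeTerm x (a - 1) b c t +
        x ^ (a + c) * qVandermondeTerm x (a - 1) (b - 1) (c + 1) (t - 1) := by
  have hsplit : x ^ a = x ^ (a - t) * x ^ t := by rw [← zpow_add₀ hx₀, sub_add_cancel]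
  have hexp : x ^ (a + c) * x ^ ((t - 1) * (t + c)) = x ^ (t * (t + c)) * x ^ (a - t) := by
    rw [← zpow_add₀ hx₀, ← zpow_add₀ hx₀]
    ring_nf
  simp only [qVandermondeTerm, show a - 1 - t = a - t - 1 by ring,
    show t - 1 + (c + 1) = t + c by ring, sub_sub_sub_cancel_right,
    qPochhammerInv_sub_one hx, hsplit]
  linear_combination (-(1 - x ^ t) * qPochhammerInv x t * qPochhammerInv x (t + c) *
    qPochhammerInv x (a - t) * qPochhammerInv x (b - t)) * hexp

lemma one_sub_zpow_mul_finsum_qVandermondeTerm (hx₀ : x ≠ 0) (hx : ¬IsOfFinOrder x) (a b c : ℤ) :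
    (1 - x ^ a) * ∑ᶠ t, qVandermondeTerm x a b c t =
      ∑ᶠ t, qVandermondeTerm x (a - 1) b c t +
        x ^ (a + c) * ∑ᶠ t, qVandermondeTerm x (a - 1) (b - 1) (c + 1) t := by
  have hshift : ∑ᶠ t, qVandermondeTerm x (a - 1) (b - 1) (c + 1) (t - 1) =
      ∑ᶠ t, qVandermondeTerm x (a - 1) (b - 1) (c + 1) t :=
    finsum_comp_equiv (Equiv.subRight 1)
  have hfin : Function.HasFiniteSupport fun t =>
      x ^ (a + c) * qVandermondeTerm x (a - 1) (b - 1) (c + 1) (t - 1) :=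
    .mul_right _ <|
      (hasFiniteSupport_qVandermondeTerm x _ _ _).comp_of_injective (Equiv.subRight 1).injective
  rw [mul_finsum, ← hshift, mul_finsum,
    ← finsum_add_distrib (hasFiniteSupport_qVandermondeTerm x _ _ _) hfin]
  exact finsum_congr (one_sub_zpow_mul_qVandermondeTerm hx₀ hx a b c)

lemma finsum_qVandermondeTerm_zero (hx : ¬IsOfFinOrder x) (b : ℤ) (n : ℕ) :
    ∑ᶠ t, qVandermondeTerm x 0 b (n - b) t =
      qPochhammer x n * qPochhammerInv x b * qPochhammerInv x (n - b) * qPochhammerInv x n := by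
  rw [finsum_eq_sum_of_support_subset _ (support_qVandermondeTerm_subset x _ _ _), Icc_self,
    sum_singleton, qPochhammerInv_natCast]
  simp only [qVandermondeTerm, zero_mul, zpow_zero, zero_add, sub_zero, qPochhammerInv_zero]
  have := qPochhammer_ne_zero hx n
  field_simp

lemma finsum_qVandermondeTerm_natCast (hx₀ : x ≠ 0) (hx : ¬IsOfFinOrder x) (a n : ℕ) (b : ℤ) :
    ∑ᶠ t, qVandermondeTerm x a b (n - b) t =
      qPochhammer x (a + n) * qPochhammerInv x a * qPochhammerInv x b *
        qPochhammerInv x (a + (n - b)) * qPochhammerInv x n := by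
  induction a generalizing b with
  | zero =>
    rw [Nat.cast_zero, finsum_qVandermondeTerm_zero hx, qPochhammerInv_zero]
    simp only [zero_add, mul_one]
  | succ a ih =>
    have ha : ((a + 1 : ℕ) : ℤ) - 1 = a := by lia
    have hne : 1 - x ^ ((a + 1 : ℕ) : ℤ) ≠ 0 := by
      rw [zpow_natCast]
      exact one_sub_pow_succ_ne_zero hx a
    have hinv : qPochhammerInv x a =
        (1 - x ^ ((a + 1 : ℕ) : ℤ)) * qPochhammerInv x (a + 1 : ℕ) := by
      rw [← qPochhammerInv_sub_one hx, ha]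
    have hpoch : qPochhammer x (a + 1 + n) =
        qPochhammer x (a + n) * (1 - x ^ ((a + 1 : ℕ) + (n - b)) * x ^ b) := by
      rw [add_right_comm, qPochhammer_succ, ← zpow_add₀ hx₀, ← zpow_natCast]
      congr 3
      lia
    apply mul_left_cancel₀ hne
    rw [one_sub_zpow_mul_finsum_qVandermondeTerm hx₀ hx, ha,
      show (n : ℤ) - b + 1 = n - (b - 1) by ring, ih, ih,
      show (a : ℤ) + (n - b) = (a + 1 : ℕ) + (n - b) - 1 by lia,
      show (a : ℤ) + (n - (b - 1)) = (a + 1 : ℕ) + (n - b) by lia,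
      qPochhammerInv_sub_one hx, qPochhammerInv_sub_one hx, hinv, hpoch]
    ring

theorem sum_qVandermondeTerm (hx₀ : x ≠ 0) (hx : ¬IsOfFinOrder x) (a b c : ℤ) :
    ∑ t ∈ Icc 0 a, qVandermondeTerm x a b c t =
      qPochhammer x (a + b + c).toNat * qPochhammerInv x a * qPochhammerInv x b *
        qPochhammerInv x (a + c) * qPochhammerInv x (b + c) := by
  rcases lt_or_ge a 0 with ha | ha
  · rw [Icc_eq_empty_of_lt ha, sum_empty, qPochhammerInv_of_neg x ha]
    ring
  rcases lt_or_ge (b + c) 0 with hbc | hbc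
  · rw [sum_eq_zero fun t _ => qVandermondeTerm_eq_zero_of_add_neg x hbc t,
      qPochhammerInv_of_neg x hbc, mul_zero]
  · lift a to ℕ using ha
    obtain ⟨n, hn⟩ := Int.eq_ofNat_of_zero_le hbc
    obtain rfl : c = n - b := by lia
    rw [← finsum_eq_sum_of_support_subset _ (support_qVandermondeTerm_subset x _ _ _),
      finsum_qVandermondeTerm_natCast hx₀ hx, hn,
      show ((a : ℤ) + b + (n - b)).toNat = a + n by lia]

theorem product_identity_general (hx₀ : x ≠ 0) (hx : ¬IsOfFinOrder x) (m₁ m₂ : ℕ) (k : ℤ) :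
    gaussBinom x (m₁ + m₂ + 1) (m₁ + k) * gaussBinom x (m₁ + m₂ + 1) (m₂ + k) =
      ∑ t ∈ Icc (0 : ℤ) (m₁ - k + 1),
        x ^ (t ^ 2 + 2 * k * t - t) * qPochhammer x (m₁ + m₂ + 1) *
          qPochhammerInv x t * qPochhammerInv x (t + 2 * k - 1) *
          qPochhammerInv x (m₁ - k - t + 1) * qPochhammerInv x (m₂ - k - t + 1) := by
  have hterm (t : ℤ) :
      x ^ (t ^ 2 + 2 * k * t - t) * qPochhammer x (m₁ + m₂ + 1) *
          qPochhammerInv x t * qPochhammerInv x (t + 2 * k - 1) *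
          qPochhammerInv x (m₁ - k - t + 1) * qPochhammerInv x (m₂ - k - t + 1) =
        qPochhammer x (m₁ + m₂ + 1) *
          qVandermondeTerm x (m₁ - k + 1) (m₂ - k + 1) (2 * k - 1) t := by
    rw [qVandermondeTerm]
    ring_nf
  have hN : ((m₁ : ℤ) + m₂ + 1).toNat = m₁ + m₂ + 1 := by lia
  simp only [hterm]
  rw [← mul_sum, sum_qVandermondeTerm hx₀ hx, gaussBinom, gaussBinom, hN,
    show (m₁ - k + 1 + (m₂ - k + 1) + (2 * k - 1)).toNat = m₁ + m₂ + 1 by lia,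
    show (m₁ : ℤ) + m₂ + 1 - (m₁ + k) = m₂ - k + 1 by ring,
    show (m₁ : ℤ) + m₂ + 1 - (m₂ + k) = m₁ - k + 1 by ring,
    show m₁ - k + 1 + (2 * k - 1) = m₁ + k by ring,
    show m₂ - k + 1 + (2 * k - 1) = m₂ + k by ring]
  ring

end

lemma not_isOfFinOrder_ratFunc_X {F : Type*} [Field F] : ¬IsOfFinOrder (RatFunc.X : RatFunc F) := by
  intro h
  obtain ⟨n, hn, hXn⟩ := isOfFinOrder_iff_pow_eq_one.mp h
  have hint : IsIntegral F (RatFunc.X : RatFunc F) := .of_pow hn (hXn ▸ isIntegral_one)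
  exact RatFunc.transcendental_X hint.isAlgebraic

lemma q_ne_zero : q ≠ 0 := RatFunc.X_ne_zero

lemma not_isOfFinOrder_q : ¬IsOfFinOrder q := not_isOfFinOrder_ratFunc_X

lemma qpoch_eq_qPochhammer (n : ℕ) : qpoch n = qPochhammer q n := rfl

lemma qpochInv_eq_qPochhammerInv (u : ℤ) : qpochInv u = qPochhammerInv q u := rfl

lemma qfact_eq_qPochhammer_div (n : ℕ) : qfact n = qPochhammer q n / (1 - q) ^ n := by
  simp only [qfact, qint, qPochhammer, prod_div_distrib, prod_const, card_range]

lemma qbinom_eq_gaussBinom (N M : ℤ) : qbinom N M = gaussBinom q N M := by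
  by_cases h : 0 ≤ M ∧ M ≤ N
  · have hq : 1 - q ≠ 0 := by simpa using one_sub_pow_succ_ne_zero not_isOfFinOrder_q 0
    have hN : N.toNat = M.toNat + (N - M).toNat := by lia
    rw [qbinom, if_pos h, gaussBinom, qPochhammerInv, if_pos h.1, qPochhammerInv,
      if_pos (sub_nonneg.mpr h.2)]
    simp only [qfact_eq_qPochhammer_div]
    rw [show (1 - q) ^ N.toNat = (1 - q) ^ M.toNat * (1 - q) ^ (N - M).toNat by
      rw [hN, pow_add]]
    field_simp
  · rw [qbinom, if_neg h, gaussBinom]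
    rcases not_and_or.mp h with hM | hM
    · rw [qPochhammerInv_of_neg q (not_le.mp hM), mul_zero, zero_mul]
    · rw [qPochhammerInv_of_neg q (sub_neg.mpr (not_le.mp hM)), mul_zero]

/-- For all nonnegative integers `m₁, m₂` and every integer `k`,
`[m₁+m₂+1 choose m₁+k] [m₁+m₂+1 choose m₂+k]
  = Σ_{t=0}^{m₁-k+1} q^{t²+2kt-t} (q;q)_{m₁+m₂+1} /
      ((q;q)_t (q;q)_{t+2k-1} (q;q)_{m₁-k-t+1} (q;q)_{m₂-k-t+1})`,
where summands with a factor `1/(q;q)_u`, `u < 0`, are interpreted as `0`. -/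
theorem product_identity (m₁ m₂ : ℕ) (k : ℤ) :
    qbinom ((m₁ : ℤ) + m₂ + 1) ((m₁ : ℤ) + k) *
        qbinom ((m₁ : ℤ) + m₂ + 1) ((m₂ : ℤ) + k) =
      ∑ t ∈ Finset.Icc (0 : ℤ) ((m₁ : ℤ) - k + 1),
        q ^ (t ^ 2 + 2 * k * t - t) * qpoch (m₁ + m₂ + 1) *
          qpochInv t * qpochInv (t + 2 * k - 1) *
          qpochInv ((m₁ : ℤ) - k - t + 1) * qpochInv ((m₂ : ℤ) - k - t + 1) := by
  simp only [qbinom_eq_gaussBinom, qpoch_eq_qPochhammer, qpochInv_eq_qPochhammerInv]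
  exact product_identity_general q_ne_zero not_isOfFinOrder_q m₁ m₂ k

end
end
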